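/- Let k ≥ 1 be a fixed integer and set δ = 1 if k is odd and δ = 2 if k is even. Then in ℤ[[x]]: ((1 − 2x)(1 − x²) + 2(1 − x)·x^{k+δ}) · Σ_{n≥0} (Σ_{m∈P(n)} (−1)^{B(m)})·x^n = (1 − x)(1 − x²). -/

import Mathlib

open PowerSeries

/-- The number of parts of a composition that are even and strictly greater than `k`. -/
def Bstat (k : ℕ) {n : ℕ} (m : Composition n) : ℕ :=
  m.blocks.countP fun j => decide (Even j ∧ k < j)

/-!
Weight each part `j` of a composition by `w j` and a composition by the product of the weights of
its parts. Splitting off the first part shows that the generating function `F` of the weighted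
compositions satisfies `F = 1 + P * F`, where `P = ∑ w j X ^ j` runs over `j ≥ 1`. If `w` is `a` on
the multiples of `d` from `e` on (`d ∣ e`, `e ≠ 0`) and `1` elsewhere, geometric series give
`P = X / (1 - X) - (1 - a) X ^ e / (1 - X ^ d)`. The theorem is the case `a = -1`, `d = 2`, with
`e = k + δ` the least even number exceeding `k`.
-/

open Finset.HasAntidiagonal (antidiagonal mem_antidiagonal)

/-- The composition of `n + 1` with first part `i + 1` followed by the parts of a composition of
`j`, where `i + j = n`. The first part is shifted so that `(i, j)` ranges over an antidiagonal. -/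
def consComposition (n : ℕ) (p : Σ ij : antidiagonal n, Composition ij.1.2) :
    Composition (n + 1) where
  blocks := (p.1.1.1 + 1) :: p.2.blocks
  blocks_pos := by
    intro i hi
    rcases List.mem_cons.1 hi with rfl | hi
    · exact Nat.succ_pos _
    · exact p.2.blocks_pos hi
  blocks_sum := by
    have hij := mem_antidiagonal.1 p.1.2
    rw [List.sum_cons, p.2.blocks_sum]
    omega

lemma consComposition_injective (n : ℕ) : Function.Injective (consComposition n) := by
  rintro ⟨⟨⟨i, j⟩, hij⟩, c⟩ ⟨⟨⟨i', j'⟩, hij'⟩, c'⟩ h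
  obtain ⟨hi, hc⟩ := List.cons.inj (congrArg Composition.blocks h)
  obtain rfl : i = i' := Nat.succ_injective hi
  obtain rfl : j = j' := by
    rw [mem_antidiagonal] at hij hij'
    omega
  obtain rfl : c = c' := Composition.ext hc
  rfl

lemma consComposition_surjective (n : ℕ) : Function.Surjective (consComposition n) := by
  rintro ⟨blocks, blocks_pos, blocks_sum⟩
  rcases blocks with _ | ⟨_ | i, l⟩
  · simp at blocks_sum
  · exact absurd (blocks_pos List.mem_cons_self) (lt_irrefl 0)
  · have hil : i + l.sum = n := by
      rw [List.sum_cons] at blocks_sum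
      omega
    exact ⟨⟨⟨(i, l.sum), mem_antidiagonal.2 hil⟩,
      ⟨l, fun hj => blocks_pos (List.mem_cons_of_mem _ hj), rfl⟩⟩, rfl⟩

section WeightedCompositions

variable {R : Type*} [Semiring R] (w : ℕ → R)

/-- The weight of a composition: the product of the weights `w j` of its parts `j`, in order. -/
def compositionWeight {n : ℕ} (c : Composition n) : R :=
  (c.blocks.map w).prod

/-- The generating function of compositions, by size, weighted by `compositionWeight w`. -/
noncomputable def compositionSeries : R⟦X⟧ :=
  mk fun n => ∑ c : Composition n, compositionWeight w c

/-- The generating function `∑ w j X ^ j` over `j ≥ 1` of a single weighted part; the value `w 0`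
is ignored. -/
noncomputable def partSeries : R⟦X⟧ :=
  X * mk fun j => w (j + 1)

lemma compositionWeight_consComposition (n : ℕ)
    (p : Σ ij : antidiagonal n, Composition ij.1.2) :
    compositionWeight w (consComposition n p) = w (p.1.1.1 + 1) * compositionWeight w p.2 :=
  List.prod_cons

lemma sum_compositionWeight_zero : ∑ c : Composition 0, compositionWeight w c = 1 := by
  have weight_eq_one (c : Composition 0) : compositionWeight w c = 1 := by
    rw [compositionWeight, c.blocks_eq_nil.2 rfl, List.map_nil, List.prod_nil]
  simp [weight_eq_one, composition_card]

lemma sum_compositionWeight_succ (n : ℕ) :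
    ∑ c : Composition (n + 1), compositionWeight w c =
      ∑ ij ∈ antidiagonal n, w (ij.1 + 1) * ∑ c : Composition ij.2, compositionWeight w c := by
  have cons_bijective : Function.Bijective (consComposition n) :=
    ⟨consComposition_injective n, consComposition_surjective n⟩
  rw [← cons_bijective.sum_comp, Fintype.sum_sigma]
  simp only [compositionWeight_consComposition, ← Finset.mul_sum]
  exact Finset.sum_coe_sort (antidiagonal n)
    fun ij => w (ij.1 + 1) * ∑ c : Composition ij.2, compositionWeight w c

lemma compositionSeries_eq_one_add :
    compositionSeries w = 1 + partSeries w * compositionSeries w := by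
  ext n
  rw [partSeries, mul_assoc, map_add]
  cases n with
  | zero => simp [compositionSeries, sum_compositionWeight_zero]
  | succ n =>
    rw [coeff_succ_X_mul, coeff_mul]
    simp [compositionSeries, sum_compositionWeight_succ, coeff_one]

end WeightedCompositions

lemma one_sub_partSeries_mul_compositionSeries {R : Type*} [Ring R] (w : ℕ → R) :
    (1 - partSeries w) * compositionSeries w = 1 := by
  rw [sub_mul, one_mul, sub_eq_iff_eq_add]
  exact compositionSeries_eq_one_add w

section Multiples

variable {R : Type*} [CommRing R] {d e : ℕ}

lemma one_sub_X_pow_mul_mk_dvd (hd : d ≠ 0) :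
    (1 - X ^ d) * mk (fun n => if d ∣ n then (1 : R) else 0) = 1 := by
  have mk_dvd_eq_expand :
      mk (fun n => if d ∣ n then (1 : R) else 0) = expand d hd (mk 1) := by
    ext n
    simp [coeff_expand]
  rw [mk_dvd_eq_expand, mul_comm]
  simpa using congrArg (expand d hd) (mk_one_mul_one_sub_eq_one R)

lemma one_sub_X_pow_mul_mk_dvd_and_le (hd : d ≠ 0) (hde : d ∣ e) :
    (1 - X ^ d) * mk (fun n => if d ∣ n ∧ e ≤ n then (1 : R) else 0) = X ^ e := by
  have mk_eq_X_pow_mul : mk (fun n => if d ∣ n ∧ e ≤ n then (1 : R) else 0) =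
      X ^ e * mk (fun n => if d ∣ n then 1 else 0) := by
    ext n
    by_cases hen : e ≤ n
    · simp [coeff_X_pow_mul', hen, Nat.dvd_sub_iff_left hen hde]
    · simp [coeff_X_pow_mul', hen]
  rw [mk_eq_X_pow_mul, mul_left_comm, one_sub_X_pow_mul_mk_dvd hd, mul_one]

lemma partSeries_ite_dvd_and_le (he : e ≠ 0) (a : R) :
    partSeries (fun j => if d ∣ j ∧ e ≤ j then a else 1) =
      X * mk 1 - C (1 - a) * mk (fun n => if d ∣ n ∧ e ≤ n then 1 else 0) := by
  ext n
  rw [partSeries, map_sub, coeff_C_mul]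
  cases n with
  | zero => simp [he]
  | succ n =>
    simp only [coeff_succ_X_mul, coeff_mk, Pi.one_apply]
    split_ifs <;> ring

lemma mul_partSeries_ite_dvd_and_le (he : e ≠ 0) (hde : d ∣ e) (a : R) :
    (1 - X) * (1 - X ^ d) * partSeries (fun j => if d ∣ j ∧ e ≤ j then a else 1) =
      X * (1 - X ^ d) - C (1 - a) * (1 - X) * X ^ e := by
  have geom := mk_one_mul_one_sub_eq_one R
  have geom_dvd := one_sub_X_pow_mul_mk_dvd_and_le (R := R) (ne_zero_of_dvd_ne_zero he hde) hde
  rw [partSeries_ite_dvd_and_le he]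
  linear_combination X * (1 - X ^ d) * geom - C (1 - a) * (1 - X) * geom_dvd

end Multiples

lemma prod_map_ite_one_eq_pow_countP {α M : Type*} [Monoid M] (p : α → Prop) [DecidablePred p]
    (a : M) (l : List α) :
    (l.map fun j => if p j then a else 1).prod = a ^ l.countP p := by
  induction l with
  | nil => simp
  | cons j l ih => by_cases hj : p j <;> simp [hj, ih, pow_succ']

theorem stmt8_general {R : Type*} [CommRing R] {d e : ℕ} (he : e ≠ 0) (hde : d ∣ e) (a : R) :
    ((1 - 2 * X) * (1 - X ^ d) + C (1 - a) * (1 - X) * X ^ e)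
      * mk (fun n => ∑ m : Composition n, a ^ m.blocks.countP fun j => d ∣ j ∧ e ≤ j)
      = (1 - X) * (1 - X ^ d) := by
  have series_eq : mk (fun n => ∑ m : Composition n, a ^ m.blocks.countP fun j => d ∣ j ∧ e ≤ j) =
      compositionSeries fun j => if d ∣ j ∧ e ≤ j then a else 1 := by
    simp only [compositionSeries, compositionWeight, prod_map_ite_one_eq_pow_countP]
  have inverse := one_sub_partSeries_mul_compositionSeries fun j => if d ∣ j ∧ e ≤ j then a else 1
  have parts := mul_partSeries_ite_dvd_and_le he hde a
  rw [series_eq]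
  linear_combination (1 - X) * (1 - X ^ d) * inverse
    + compositionSeries (fun j => if d ∣ j ∧ e ≤ j then a else 1) * parts

lemma even_and_lt_iff_two_dvd_and_add_le {k δ : ℕ} (hδ : δ = if Odd k then 1 else 2) (j : ℕ) :
    Even j ∧ k < j ↔ 2 ∣ j ∧ k + δ ≤ j := by
  grind

theorem stmt8 (k : ℕ) (hk : 1 ≤ k) (δ : ℕ) (hδ : δ = if Odd k then 1 else 2) :
    ((1 - 2 * PowerSeries.X) * (1 - PowerSeries.X ^ 2)
        + 2 * (1 - PowerSeries.X) * PowerSeries.X ^ (k + δ))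
      * PowerSeries.mk (fun n => ∑ m : Composition n, (-1 : ℤ) ^ Bstat k m)
      = (1 - PowerSeries.X) * (1 - PowerSeries.X ^ 2) := by
  have two_dvd : 2 ∣ k + δ := by grind
  simpa [Bstat, even_and_lt_iff_two_dvd_and_add_le hδ, one_add_one_eq_two] using
    stmt8_general (by grind : k + δ ≠ 0) two_dvd (-1 : ℤ)
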